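/- arXiv:math/0407262 — 2 statements merged into one kernel-verified Lean document; each statement's English description precedes it below -/
import Mathlib

section
/- For all 0 < u < v ≤ ∞, the Lebesgue integral of z ↦ z₁^{-d-α} over the slab P_β^{u,v} equals V_{d-1} · ∫_u^v t^{β(d-1) - d - α} dt, where V_{d-1} is the Lebesgue volume of the unit ball in ℝ^{d-1}. -/
open MeasureTheory Metric
open scoped ENNReal

/-- The Euclidean norm of the "tail" `z̃ = (z₂, …, z_d)` of a point
`z = (z₁, z̃) ∈ ℝ^d` (here `d = n + 2 ≥ 2`). -/
noncomputable def tailNorm {n : ℕ} (z : EuclideanSpace ℝ (Fin (n + 2))) : ℝ :=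
  Real.sqrt (∑ i ∈ Finset.univ.filter (fun i : Fin (n + 2) => i ≠ 0), z i ^ 2)

/-- The parabola-shaped region `P_β = {z = (z₁, z̃) : z₁ > 0, |z̃| < z₁^β}` in `ℝ^d`,
`d = n + 2 ≥ 2`. -/
def Pbeta (n : ℕ) (β : ℝ) : Set (EuclideanSpace ℝ (Fin (n + 2))) :=
  {z | 0 < z 0 ∧ tailNorm z < z 0 ^ β}

/-- The slab `P_β^{u,v} = P_β ∩ {z : u ≤ z₁ < v}`, where `v ∈ (0, ∞]` is an
extended real number. -/
def PbetaSlab (n : ℕ) (β u : ℝ) (v : ℝ≥0∞) : Set (EuclideanSpace ℝ (Fin (n + 2))) :=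
  Pbeta n β ∩ {z | u ≤ z 0 ∧ ENNReal.ofReal (z 0) < v}

/- The coordinate `z ↦ z₁` pushes Lebesgue measure on `P_β` forward to the measure on `(0, ∞)` whose
density is the `(d-1)`-dimensional volume `V_{d-1} t^{β(d-1)}` of the cross section at height `t`,
which is a ball of radius `t^β`. Integrating a function of `z₁` over a part of `P_β` cut out by a
condition on `z₁` is therefore a one-dimensional integral against this density. -/

open Set

section Tube

/-- The tube over `s` with radius function `ρ`: the set of pairs `(x, y)` with `x ∈ s` and
`‖y‖ < ρ x`. It abstracts `P_β`, with `z₁` in the role of `x` and `z̃` in the role of `y`. -/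
def tube {X E : Type*} [Norm E] (s : Set X) (ρ : X → ℝ) : Set (X × E) :=
  {p | p.1 ∈ s ∧ ‖p.2‖ < ρ p.1}

variable {X E : Type*} [MeasurableSpace X] [SeminormedAddCommGroup E] [MeasurableSpace E]
  {μ : Measure X} {ν : Measure E} {s : Set X} {ρ : X → ℝ}

theorem measurable_measure_ball_comp (hρ : Measurable ρ) :
    Measurable fun x => ν (ball 0 (ρ x)) := by
  have measure_ball_mono : Monotone fun r => ν (ball 0 r) :=
    fun _ _ h => measure_mono (ball_subset_ball h)
  exact measure_ball_mono.measurable.comp hρ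

variable [OpensMeasurableSpace E]

theorem measurableSet_tube (hs : MeasurableSet s) (hρ : Measurable ρ) :
    MeasurableSet (tube s ρ : Set (X × E)) := by
  have fibre_condition : MeasurableSet {p : X × E | ‖p.2‖ < ρ p.1} :=
    measurableSet_lt (by fun_prop) (by fun_prop)
  exact (measurable_fst hs).inter fibre_condition

theorem prod_tube [SFinite ν] (hs : MeasurableSet s) (hρ : Measurable ρ) :
    μ.prod ν (tube s ρ) = ∫⁻ x in s, ν (ball 0 (ρ x)) ∂μ := by
  rw [Measure.prod_apply (measurableSet_tube hs hρ), ← lintegral_indicator hs]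
  refine lintegral_congr fun x => ?_
  by_cases hx : x ∈ s
  · have fibre_eq : Prod.mk x ⁻¹' tube s ρ = ball (0 : E) (ρ x) := by
      ext y
      simp [tube, hx]
    rw [fibre_eq, indicator_of_mem hx]
  · have fibre_eq : Prod.mk x ⁻¹' tube s ρ = (∅ : Set E) := by
      ext y
      simp [tube, hx]
    rw [fibre_eq, measure_empty, indicator_of_notMem hx]

theorem map_fst_restrict_tube [SFinite ν] (hs : MeasurableSet s) (hρ : Measurable ρ) :
    ((μ.prod ν).restrict (tube s ρ)).map Prod.fst
      = (μ.restrict s).withDensity fun x => ν (ball 0 (ρ x)) := by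
  ext A hA
  have preimage_inter_tube : Prod.fst ⁻¹' A ∩ tube s ρ = (tube (A ∩ s) ρ : Set (X × E)) := by
    ext p
    simp [tube, and_assoc]
  rw [Measure.map_apply measurable_fst hA, Measure.restrict_apply (measurable_fst hA),
    preimage_inter_tube, prod_tube (hA.inter hs) hρ, withDensity_apply _ hA,
    Measure.restrict_restrict hA]

theorem aestronglyMeasurable_map_fst_restrict_tube [SFinite ν] {Y : Type*} [TopologicalSpace Y]
    {f : X → Y} (hs : MeasurableSet s) (hρ : Measurable ρ)
    (hf : AEStronglyMeasurable f (μ.restrict s)) :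
    AEStronglyMeasurable f (((μ.prod ν).restrict (tube s ρ)).map Prod.fst) := by
  rw [map_fst_restrict_tube hs hρ]
  exact hf.mono_ac (withDensity_absolutelyContinuous _ _)

variable [ProperSpace E] [IsFiniteMeasureOnCompacts ν]
  {F : Type*} [NormedAddCommGroup F] [NormedSpace ℝ F] {f : X → F}

theorem integrableOn_tube_iff (hs : MeasurableSet s) (hρ : Measurable ρ)
    (hf : AEStronglyMeasurable f (μ.restrict s)) :
    IntegrableOn (fun p => f p.1) (tube s ρ) (μ.prod ν)
      ↔ IntegrableOn (fun x => ν.real (ball 0 (ρ x)) • f x) s μ := by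
  have hf_map := aestronglyMeasurable_map_fst_restrict_tube (ν := ν) hs hρ hf
  rw [IntegrableOn, ← Function.comp_def f,
    ← integrable_map_measure hf_map measurable_fst.aemeasurable, map_fst_restrict_tube hs hρ,
    integrable_withDensity_iff_integrable_smul' (measurable_measure_ball_comp hρ)
      (ae_of_all _ fun _ => measure_ball_lt_top)]
  rfl

theorem setIntegral_tube (hs : MeasurableSet s) (hρ : Measurable ρ)
    (hf : AEStronglyMeasurable f (μ.restrict s)) :
    ∫ p in tube s ρ, f p.1 ∂μ.prod ν = ∫ x in s, ν.real (ball 0 (ρ x)) • f x ∂μ := by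
  have hf_map := aestronglyMeasurable_map_fst_restrict_tube (ν := ν) hs hρ hf
  rw [← integral_map measurable_fst.aemeasurable hf_map, map_fst_restrict_tube hs hρ,
    integral_withDensity_eq_integral_toReal_smul (measurable_measure_ball_comp hρ)
      (ae_of_all _ fun _ => measure_ball_lt_top)]
  rfl

end Tube

section SplitHead

/-- The identification `z = (z₁, z̃)` of `ℝ^{m+1}` with `ℝ × ℝ^m`, the second factor carrying the
Euclidean norm. -/
noncomputable def splitHead (m : ℕ) :
    EuclideanSpace ℝ (Fin (m + 1)) ≃ᵐ ℝ × EuclideanSpace ℝ (Fin m) :=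
  ((MeasurableEquiv.toLp 2 (Fin (m + 1) → ℝ)).symm.trans
    (MeasurableEquiv.piFinSuccAbove (fun _ => ℝ) 0)).trans
      ((MeasurableEquiv.refl ℝ).prodCongr (MeasurableEquiv.toLp 2 (Fin m → ℝ)))

theorem splitHead_apply {m : ℕ} (z : EuclideanSpace ℝ (Fin (m + 1))) :
    splitHead m z = (z 0, WithLp.toLp 2 fun j => z j.succ) :=
  rfl

theorem measurePreserving_splitHead (m : ℕ) : MeasurePreserving (splitHead m) :=
  ((MeasurePreserving.id volume).prod (PiLp.volume_preserving_toLp (Fin m))).comp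
    ((volume_preserving_piFinSuccAbove (fun _ : Fin (m + 1) => ℝ) 0).comp
      (PiLp.volume_preserving_ofLp (Fin (m + 1))))

theorem norm_snd_splitHead {n : ℕ} (z : EuclideanSpace ℝ (Fin (n + 2))) :
    ‖(splitHead (n + 1) z).2‖ = tailNorm z := by
  simp [splitHead_apply, tailNorm, EuclideanSpace.norm_eq, Finset.sum_filter, Fin.sum_univ_succ]

end SplitHead

section Pbeta

variable (n : ℕ) (β : ℝ) {s : Set ℝ}

theorem Pbeta_inter_eq_preimage_tube (s : Set ℝ) :
    Pbeta n β ∩ {z | z 0 ∈ s} = splitHead (n + 1) ⁻¹' tube (Ioi 0 ∩ s) (· ^ β) := by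
  ext z
  simp only [Pbeta, tube, ← norm_snd_splitHead, mem_inter_iff, mem_ofPred_eq, mem_preimage, mem_Ioi]
  exact and_right_comm

theorem volume_real_ball_rpow {t : ℝ} (ht : 0 < t) :
    volume.real (ball (0 : EuclideanSpace ℝ (Fin (n + 1))) (t ^ β))
      = volume.real (ball (0 : EuclideanSpace ℝ (Fin (n + 1))) 1) * t ^ (β * ((n : ℝ) + 1)) := by
  rw [Measure.real, Measure.addHaar_ball _ _ (Real.rpow_nonneg ht.le β), finrank_euclideanSpace_fin,
    ← Real.rpow_mul_natCast ht.le, Nat.cast_succ, ENNReal.toReal_mul,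
    ENNReal.toReal_ofReal (Real.rpow_nonneg ht.le _), mul_comm, Measure.real]

variable {F : Type*} [NormedAddCommGroup F] [NormedSpace ℝ F] {f : ℝ → F}

theorem volume_real_ball_rpow_smul_eqOn :
    EqOn (fun t => volume.real (ball (0 : EuclideanSpace ℝ (Fin (n + 1))) (t ^ β)) • f t)
      (fun t => volume.real (ball (0 : EuclideanSpace ℝ (Fin (n + 1))) 1)
        • t ^ (β * ((n : ℝ) + 1)) • f t) (Ioi 0) := fun t ht => by
  simp only [volume_real_ball_rpow n β ht, mul_smul]

theorem integrableOn_Pbeta_inter_iff (hs : MeasurableSet s)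
    (hf : AEStronglyMeasurable f (volume.restrict (Ioi 0 ∩ s))) :
    IntegrableOn (fun z => f (z 0)) (Pbeta n β ∩ {z | z 0 ∈ s})
      ↔ IntegrableOn (fun t => t ^ (β * ((n : ℝ) + 1)) • f t) (Ioi 0 ∩ s) := by
  have hs' : MeasurableSet (Ioi 0 ∩ s) := measurableSet_Ioi.inter hs
  have unit_ball_ne_zero : volume.real (ball (0 : EuclideanSpace ℝ (Fin (n + 1))) 1) ≠ 0 :=
    (ENNReal.toReal_pos (measure_ball_pos _ _ one_pos).ne' measure_ball_lt_top.ne).ne'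
  rw [Pbeta_inter_eq_preimage_tube]
  calc
    _ ↔ IntegrableOn (fun p : ℝ × EuclideanSpace ℝ (Fin (n + 1)) => f p.1)
          (tube (Ioi 0 ∩ s) (· ^ β)) volume :=
      (measurePreserving_splitHead (n + 1)).integrableOn_comp_preimage
        (splitHead (n + 1)).measurableEmbedding (f := fun p => f p.1)
    _ ↔ IntegrableOn
          (fun t => volume.real (ball (0 : EuclideanSpace ℝ (Fin (n + 1))) (t ^ β)) • f t)
          (Ioi 0 ∩ s) volume :=
      integrableOn_tube_iff hs' (by fun_prop) hf
    _ ↔ _ :=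
      integrableOn_congr_fun ((volume_real_ball_rpow_smul_eqOn n β).mono inter_subset_left) hs'
    _ ↔ _ := integrable_smul_iff unit_ball_ne_zero _

theorem setIntegral_Pbeta_inter (hs : MeasurableSet s)
    (hf : AEStronglyMeasurable f (volume.restrict (Ioi 0 ∩ s))) :
    ∫ z in Pbeta n β ∩ {z | z 0 ∈ s}, f (z 0)
      = volume.real (ball (0 : EuclideanSpace ℝ (Fin (n + 1))) 1)
        • ∫ t in Ioi 0 ∩ s, t ^ (β * ((n : ℝ) + 1)) • f t := by
  have hs' : MeasurableSet (Ioi 0 ∩ s) := measurableSet_Ioi.inter hs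
  rw [Pbeta_inter_eq_preimage_tube]
  calc
    _ = ∫ p in tube (E := EuclideanSpace ℝ (Fin (n + 1))) (Ioi 0 ∩ s) (· ^ β), f p.1 :=
      (measurePreserving_splitHead (n + 1)).setIntegral_preimage_emb
        (splitHead (n + 1)).measurableEmbedding (fun p => f p.1) _
    _ = ∫ t in Ioi 0 ∩ s,
          volume.real (ball (0 : EuclideanSpace ℝ (Fin (n + 1))) (t ^ β)) • f t :=
      setIntegral_tube hs' (by fun_prop) hf
    _ = _ :=
      setIntegral_congr_fun hs' ((volume_real_ball_rpow_smul_eqOn n β).mono inter_subset_left)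
    _ = _ := integral_smul _ _

end Pbeta

theorem Ioi_inter_ae_eq {μ : Measure ℝ} [NullSingletonClass μ] {a : ℝ} {s : Set ℝ}
    (hs : s ⊆ Ici a) : (Ioi a ∩ s : Set ℝ) =ᵐ[μ] s := by
  simpa only [inter_eq_right.2 hs] using
    (Ioi_ae_eq_Ici (μ := μ) (a := a)).inter (ae_eq_refl s)

/- A Bochner integral that diverges is `0` by convention; the equivalence says that this happens on
both sides of the identity at once. -/
theorem stmt6_general (n : ℕ) (α β : ℝ) {u : ℝ} (v : ℝ≥0∞) (hu : 0 ≤ u) :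
    (IntegrableOn (fun z => (z 0) ^ (-((n : ℝ) + 2) - α)) (PbetaSlab n β u v)
      ↔ IntegrableOn (fun t : ℝ => t ^ (β * ((n : ℝ) + 1) - ((n : ℝ) + 2) - α))
          {t : ℝ | u ≤ t ∧ ENNReal.ofReal t < v}) ∧
    ∫ z in PbetaSlab n β u v, (z 0) ^ (-((n : ℝ) + 2) - α)
      = (volume (ball (0 : EuclideanSpace ℝ (Fin (n + 1))) 1)).toReal
        * ∫ t in {t : ℝ | u ≤ t ∧ ENNReal.ofReal t < v},
            t ^ (β * ((n : ℝ) + 1) - ((n : ℝ) + 2) - α) := by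
  set s := {t : ℝ | u ≤ t ∧ ENNReal.ofReal t < v}
  have hs : MeasurableSet s :=
    measurableSet_Ici.inter (ENNReal.measurable_ofReal measurableSet_Iio)
  have hs' : MeasurableSet (Ioi 0 ∩ s) := measurableSet_Ioi.inter hs
  have pos_inter_ae_eq : (Ioi 0 ∩ s : Set ℝ) =ᵐ[volume] s :=
    Ioi_inter_ae_eq fun _ ht => hu.trans ht.1
  have hf : Measurable fun t : ℝ => t ^ (-((n : ℝ) + 2) - α) := by fun_prop
  have powers_eqOn : EqOn
      (fun t => t ^ (β * ((n : ℝ) + 1)) • t ^ (-((n : ℝ) + 2) - α))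
      (fun t => t ^ (β * ((n : ℝ) + 1) - ((n : ℝ) + 2) - α)) (Ioi 0 ∩ s) := fun t ht => by
    simp only [smul_eq_mul, ← Real.rpow_add ht.1]
    ring_nf
  constructor
  · exact (integrableOn_Pbeta_inter_iff n β hs hf.aestronglyMeasurable).trans
      ((integrableOn_congr_fun powers_eqOn hs').trans (integrableOn_congr_set_ae pos_inter_ae_eq))
  · exact (setIntegral_Pbeta_inter n β hs hf.aestronglyMeasurable).trans
      (congrArg _ ((setIntegral_congr_fun hs' powers_eqOn).trans
        (setIntegral_congr_set pos_inter_ae_eq)))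

/-- For `0 < u < v ≤ ∞`, the Lebesgue integral of `z ↦ z₁^{-d-α}` over the slab
`P_β^{u,v}` equals `V_{d-1} · ∫_u^v t^{β(d-1) - d - α} dt`, where `V_{d-1}` is the
Lebesgue volume of the unit ball in `ℝ^{d-1}` (here `d = n + 2`). -/
theorem stmt6 (n : ℕ) (α β : ℝ) (hα0 : 0 < α) (hα2 : α < 2)
    (hβ0 : 0 < β) (hβ1 : β < 1) (u : ℝ) (v : ℝ≥0∞)
    (hu : 0 < u) (huv : ENNReal.ofReal u < v) :
    ∫ z in PbetaSlab n β u v, (z 0) ^ (-((n : ℝ) + 2) - α)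
      = (volume (ball (0 : EuclideanSpace ℝ (Fin (n + 1))) 1)).toReal
        * ∫ t in {t : ℝ | u ≤ t ∧ ENNReal.ofReal t < v},
            t ^ (β * ((n : ℝ) + 1) - ((n : ℝ) + 2) - α) :=
  (stmt6_general n α β v hu.le).2
end

section
/- There exists a constant c > 0, depending only on d, α and β, such that for every s ≥ 1, every x = (x₁, x̃) ∈ ℝ^d with x₁ ≤ s/2, and all u, v with s + s^β ≤ u < v ≤ ∞, the Lebesgue integral of z ↦ |z - x|^{-d-α} over P_β^{u,v} is at most c · ∫_u^v t^{-αβp₀ - 1} dt. -/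
open MeasureTheory
open scoped ENNReal

/-!
For `z ∈ P_β` with `z₁ ≥ 2x₁` we have `|z - x| ≥ z₁ - x₁ ≥ z₁ / 2`, so the kernel is at most
`(z₁ / 2)^{-d-α}`, a function of `z₁` alone. By Fubini, integrating it over `P_β` weights it by the
volume `ω t^{β(d-1)}` of the slice of `P_β` at height `t`, and `-d - α + β(d-1) = -αβp₀ - 1`.
-/

section SolidOfRevolution

variable {X Y E : Type*}

lemma setLIntegral_prod_comp_fst [MeasurableSpace X] [MeasurableSpace Y] (μ : Measure X)
    (ν : Measure Y) [SFinite ν] {S : Set (X × Y)} (hS : MeasurableSet S) {g : X → ℝ≥0∞}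
    (hg : Measurable g) :
    ∫⁻ p in S, g p.1 ∂μ.prod ν = ∫⁻ x, g x * ν (Prod.mk x ⁻¹' S) ∂μ := by
  have hgS : Measurable (S.indicator fun p => g p.1) := (hg.comp measurable_fst).indicator hS
  rw [← lintegral_indicator hS, lintegral_prod _ hgS.aemeasurable]
  congr with x
  rw [← lintegral_indicator_const (measurable_prodMk_left hS)]
  rfl

/-- The solid of revolution over the base `T` with radius profile `r`, whose slice at `t ∈ T` is
the open ball of radius `r t` about the origin. The region `P_β`, restricted to `z₁ ∈ T`, is the
case `r t = t ^ β`. -/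
def solidOfRevolution (E : Type*) [Norm E] (T : Set X) (r : X → ℝ) : Set (X × E) :=
  {p | p.1 ∈ T ∧ ‖p.2‖ < r p.1}

variable [NormedAddCommGroup E] {T : Set X} {r : X → ℝ}

lemma preimage_prodMk_solidOfRevolution_of_mem {t : X} (ht : t ∈ T) :
    Prod.mk t ⁻¹' solidOfRevolution E T r = Metric.ball 0 (r t) := by
  ext y
  simp [solidOfRevolution, ht]

lemma preimage_prodMk_solidOfRevolution_of_notMem {t : X} (ht : t ∉ T) :
    Prod.mk t ⁻¹' solidOfRevolution E T r = ∅ := by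
  ext y
  simp [solidOfRevolution, ht]

variable [MeasurableSpace X] [MeasurableSpace E]

lemma measurableSet_solidOfRevolution [OpensMeasurableSpace E] (hT : MeasurableSet T)
    (hr : Measurable r) : MeasurableSet (solidOfRevolution E T r) :=
  (measurable_fst hT).inter (measurableSet_lt measurable_snd.norm (hr.comp measurable_fst))

lemma setLIntegral_solidOfRevolution_comp_fst [NormedSpace ℝ E] [FiniteDimensional ℝ E]
    [BorelSpace E] (μ : Measure X) (ν : Measure E) [ν.IsAddHaarMeasure] (hT : MeasurableSet T)
    (hr : Measurable r) (hr_pos : ∀ t ∈ T, 0 < r t) {g : X → ℝ≥0∞} (hg : Measurable g) :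
    ∫⁻ p in solidOfRevolution E T r, g p.1 ∂μ.prod ν
      = ν (Metric.ball 0 1) *
        ∫⁻ t in T, g t * ENNReal.ofReal (r t ^ Module.finrank ℝ E) ∂μ := by
  rw [setLIntegral_prod_comp_fst μ ν (measurableSet_solidOfRevolution hT hr) hg,
    ← lintegral_const_mul _ (by fun_prop), ← lintegral_indicator hT]
  congr with t
  by_cases ht : t ∈ T
  · rw [preimage_prodMk_solidOfRevolution_of_mem ht, Set.indicator_of_mem ht,
      Measure.addHaar_ball_of_pos ν _ (hr_pos t ht)]
    ring
  · rw [preimage_prodMk_solidOfRevolution_of_notMem ht, Set.indicator_of_notMem ht,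
      measure_empty, mul_zero]

end SolidOfRevolution

section HeadTail

/-- The splitting `z ↦ (z₁, z̃)` of `ℝ^{m+1}` as `ℝ × ℝ^m`, with both `ℝ^{m+1}` and `ℝ^m`
carrying the Euclidean norm. -/
def headTail (m : ℕ) (z : EuclideanSpace ℝ (Fin (m + 1))) : ℝ × EuclideanSpace ℝ (Fin m) :=
  (z 0, WithLp.toLp 2 fun i => z i.succ)

lemma measurePreserving_headTail (m : ℕ) : MeasurePreserving (headTail m) :=
  ((MeasurePreserving.id volume).prod (PiLp.volume_preserving_toLp (Fin m))).comp <|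
    (volume_preserving_piFinSuccAbove (fun _ : Fin (m + 1) => ℝ) 0).comp <|
      PiLp.volume_preserving_ofLp (Fin (m + 1))

variable {n : ℕ}

lemma tailNorm_eq_norm_headTail_snd (z : EuclideanSpace ℝ (Fin (n + 2))) :
    tailNorm z = ‖(headTail (n + 1) z).2‖ := by
  simp [tailNorm, headTail, EuclideanSpace.norm_eq, Finset.sum_filter, Fin.sum_univ_succ]

lemma Pbeta_inter_eq_preimage_headTail (β : ℝ) {T : Set ℝ} (hT : T ⊆ Set.Ioi 0) :
    Pbeta n β ∩ {z | z 0 ∈ T}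
      = headTail (n + 1) ⁻¹' solidOfRevolution _ T fun t => t ^ β := by
  ext z
  constructor
  · rintro ⟨⟨-, hz⟩, hzT⟩
    exact ⟨hzT, tailNorm_eq_norm_headTail_snd z ▸ hz⟩
  · rintro ⟨hzT, hz⟩
    exact ⟨⟨hT hzT, tailNorm_eq_norm_headTail_snd z ▸ hz⟩, hzT⟩

lemma measurableSet_Pbeta_inter (β : ℝ) {T : Set ℝ} (hTm : MeasurableSet T)
    (hT : T ⊆ Set.Ioi 0) : MeasurableSet (Pbeta n β ∩ {z | z 0 ∈ T}) := by
  rw [Pbeta_inter_eq_preimage_headTail β hT]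
  exact (measurePreserving_headTail _).measurable
    (measurableSet_solidOfRevolution hTm (by fun_prop))

lemma setLIntegral_Pbeta_inter_comp_head (β : ℝ) {T : Set ℝ} (hTm : MeasurableSet T)
    (hT : T ⊆ Set.Ioi 0) {g : ℝ → ℝ≥0∞} (hg : Measurable g) :
    ∫⁻ z in Pbeta n β ∩ {z | z 0 ∈ T}, g (z 0)
      = volume (Metric.ball (0 : EuclideanSpace ℝ (Fin (n + 1))) 1) *
        ∫⁻ t in T, g t * ENNReal.ofReal ((t ^ β) ^ (n + 1)) := by
  have hr : Measurable fun t : ℝ => t ^ β := by fun_prop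
  calc ∫⁻ z in Pbeta n β ∩ {z | z 0 ∈ T}, g (z 0)
    _ = ∫⁻ p in solidOfRevolution (EuclideanSpace ℝ (Fin (n + 1))) T fun t => t ^ β, g p.1 := by
        rw [Pbeta_inter_eq_preimage_headTail β hT]
        exact (measurePreserving_headTail (n + 1)).setLIntegral_comp_preimage
          (measurableSet_solidOfRevolution hTm hr) (hg.comp measurable_fst)
    _ = volume (Metric.ball (0 : EuclideanSpace ℝ (Fin (n + 1))) 1) *
          ∫⁻ t in T, g t * ENNReal.ofReal ((t ^ β) ^ (n + 1)) := by
        have hr_pos : ∀ t ∈ T, 0 < t ^ β := fun t ht => Real.rpow_pos_of_pos (hT ht) β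
        rw [Measure.volume_eq_prod,
          setLIntegral_solidOfRevolution_comp_fst volume volume hTm hr hr_pos hg,
          finrank_euclideanSpace_fin]

end HeadTail

lemma norm_sub_rpow_le_half_rpow {ι : Type*} [Fintype ι] {x z : EuclideanSpace ℝ ι} {i : ι}
    {p : ℝ} (hp : p ≤ 0) (hz : 0 < z i) (hxz : x i ≤ z i / 2) :
    ‖z - x‖ ^ p ≤ (z i / 2) ^ p := by
  refine Real.rpow_le_rpow_of_nonpos (by linarith) ?_ hp
  calc z i / 2 ≤ (z - x) i := by rw [PiLp.sub_apply]; linarith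
    _ ≤ ‖(z - x) i‖ := Real.le_norm_self _
    _ ≤ ‖z - x‖ := PiLp.norm_apply_le _ i

lemma half_rpow_mul_rpow_pow {t : ℝ} (ht : 0 < t) (p β : ℝ) (m : ℕ) :
    (t / 2) ^ p * (t ^ β) ^ m = 2 ^ (-p) * t ^ (p + β * m) := by
  rw [Real.div_rpow ht.le zero_le_two, Real.rpow_neg zero_le_two, Real.rpow_add ht,
    Real.rpow_mul_natCast ht.le]
  ring

lemma setLIntegral_norm_sub_rpow_Pbeta_inter_le {n : ℕ} {β p : ℝ} (hp : p ≤ 0)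
    {x : EuclideanSpace ℝ (Fin (n + 2))} {T : Set ℝ} (hTm : MeasurableSet T)
    (hT : T ⊆ Set.Ioi 0) (hx : ∀ t ∈ T, x 0 ≤ t / 2) :
    ∫⁻ z in Pbeta n β ∩ {z | z 0 ∈ T}, ENNReal.ofReal (‖z - x‖ ^ p)
      ≤ ENNReal.ofReal (2 ^ (-p)) * volume (Metric.ball (0 : EuclideanSpace ℝ (Fin (n + 1))) 1) *
        ∫⁻ t in T, ENNReal.ofReal (t ^ (p + β * (n + 1))) := by
  set ω := volume (Metric.ball (0 : EuclideanSpace ℝ (Fin (n + 1))) 1)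
  calc ∫⁻ z in Pbeta n β ∩ {z | z 0 ∈ T}, ENNReal.ofReal (‖z - x‖ ^ p)
    _ ≤ ∫⁻ z in Pbeta n β ∩ {z | z 0 ∈ T}, ENNReal.ofReal ((z 0 / 2) ^ p) :=
        setLIntegral_mono' (measurableSet_Pbeta_inter β hTm hT) fun z hz =>
          ENNReal.ofReal_le_ofReal <|
            norm_sub_rpow_le_half_rpow hp (hT hz.2) (hx _ hz.2)
    _ = ω * ∫⁻ t in T, ENNReal.ofReal ((t / 2) ^ p) * ENNReal.ofReal ((t ^ β) ^ (n + 1)) :=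
        setLIntegral_Pbeta_inter_comp_head β hTm hT
          (g := fun t => ENNReal.ofReal ((t / 2) ^ p)) (by fun_prop)
    _ = ω * ∫⁻ t in T, ENNReal.ofReal (2 ^ (-p)) * ENNReal.ofReal (t ^ (p + β * (n + 1))) := by
        congr 1
        refine setLIntegral_congr_fun hTm fun t ht => ?_
        have ht_pos : 0 < t := hT ht
        rw [← ENNReal.ofReal_mul (by positivity), ← ENNReal.ofReal_mul (by positivity),
          half_rpow_mul_rpow_pow ht_pos, Nat.cast_add_one]
    _ = ENNReal.ofReal (2 ^ (-p)) * ω * ∫⁻ t in T, ENNReal.ofReal (t ^ (p + β * (n + 1))) := by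
        rw [lintegral_const_mul _ (by fun_prop)]
        ring

lemma integrable_and_integral_le_of_lintegral_le {X Y : Type*} [MeasurableSpace X]
    [MeasurableSpace Y] {μ : Measure X} {ν : Measure Y} {f : X → ℝ} {g : Y → ℝ}
    (hf : AEStronglyMeasurable f μ) (hf_nonneg : 0 ≤ᵐ[μ] f) (hg : Integrable g ν)
    (hg_nonneg : 0 ≤ᵐ[ν] g) {c : ℝ≥0∞} (hc : c ≠ ∞)
    (h : ∫⁻ x, ENNReal.ofReal (f x) ∂μ ≤ c * ∫⁻ y, ENNReal.ofReal (g y) ∂ν) :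
    Integrable f μ ∧ ∫ x, f x ∂μ ≤ c.toReal * ∫ y, g y ∂ν := by
  have hcg : c * ∫⁻ y, ENNReal.ofReal (g y) ∂ν ≠ ∞ :=
    ENNReal.mul_ne_top hc ((lintegral_ofReal_ne_top_iff_integrable hg.1 hg_nonneg).2 hg)
  refine ⟨(lintegral_ofReal_ne_top_iff_integrable hf hf_nonneg).1 (ne_top_of_le_ne_top hcg h), ?_⟩
  rw [integral_eq_lintegral_of_nonneg_ae hf_nonneg hf,
    integral_eq_lintegral_of_nonneg_ae hg_nonneg hg.1, ← ENNReal.toReal_mul]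
  exact ENNReal.toReal_mono hcg h

lemma integrableOn_rpow_of_subset_Ici {q s : ℝ} {T : Set ℝ} (hq : q < -1) (hs : 0 < s)
    (hT : T ⊆ Set.Ici s) : IntegrableOn (fun t : ℝ => t ^ q) T :=
  (integrableOn_Ioi_rpow_of_lt hq (half_pos hs)).mono_set <|
    hT.trans (Set.Ici_subset_Ioi.2 (half_lt_self hs))

lemma integrableOn_and_setIntegral_norm_sub_rpow_Pbeta_inter_le {n : ℕ} {β p s : ℝ} (hp : p ≤ 0)
    (hq : p + β * (n + 1) < -1) (hs : 0 < s) {x : EuclideanSpace ℝ (Fin (n + 2))}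
    (hx : x 0 ≤ s / 2) {T : Set ℝ} (hTm : MeasurableSet T) (hT : T ⊆ Set.Ici s) :
    IntegrableOn (fun z => ‖z - x‖ ^ p) (Pbeta n β ∩ {z | z 0 ∈ T}) ∧
      ∫ z in Pbeta n β ∩ {z | z 0 ∈ T}, ‖z - x‖ ^ p
        ≤ 2 ^ (-p) * volume.real (Metric.ball (0 : EuclideanSpace ℝ (Fin (n + 1))) 1) *
          ∫ t in T, t ^ (p + β * (n + 1)) := by
  have hT_pos : T ⊆ Set.Ioi 0 := hT.trans (Set.Ici_subset_Ioi.2 hs)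
  have hxT : ∀ t ∈ T, x 0 ≤ t / 2 := fun t ht =>
    hx.trans (div_le_div_of_nonneg_right (hT ht) zero_le_two)
  have htransfer := integrable_and_integral_le_of_lintegral_le
    (Measurable.aestronglyMeasurable (by fun_prop))
    (ae_of_all _ fun z => Real.rpow_nonneg (norm_nonneg (z - x)) p)
    (integrableOn_rpow_of_subset_Ici hq hs hT)
    (ae_restrict_of_forall_mem hTm fun t ht => Real.rpow_nonneg (hT_pos ht).le _)
    (ENNReal.mul_ne_top ENNReal.ofReal_ne_top measure_ball_lt_top.ne)
    (setLIntegral_norm_sub_rpow_Pbeta_inter_le hp hTm hT_pos hxT)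
  rwa [ENNReal.toReal_mul, ENNReal.toReal_ofReal (by positivity)] at htransfer

lemma measurableSet_setOf_le_and_ofReal_lt (u : ℝ) (v : ℝ≥0∞) :
    MeasurableSet {t : ℝ | u ≤ t ∧ ENNReal.ofReal t < v} :=
  measurableSet_Ici.inter (measurableSet_lt ENNReal.measurable_ofReal measurable_const)

lemma neg_mul_p₀_sub_one {α β : ℝ} (hα : α ≠ 0) (hβ : β ≠ 0) (n : ℝ) :
    -(α * β * (((n + 1) * (1 - β) + α) / (α * β))) - 1 = -(n + 2) - α + β * (n + 1) := by
  field_simp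
  ring

theorem stmt13_general (n : ℕ) {α β : ℝ} (hα : α ≠ 0) (hβ : 0 < β)
    (hαβ : β * (n + 1) < n + 1 + α) :
    ∃ c > (0 : ℝ), ∀ s : ℝ, 0 < s →
      ∀ x : EuclideanSpace ℝ (Fin (n + 2)), x 0 ≤ s / 2 →
      ∀ T : Set ℝ, MeasurableSet T → T ⊆ Set.Ici s →
        IntegrableOn (fun z => ‖z - x‖ ^ (-((n : ℝ) + 2) - α)) (Pbeta n β ∩ {z | z 0 ∈ T}) ∧
        ∫ z in Pbeta n β ∩ {z | z 0 ∈ T}, ‖z - x‖ ^ (-((n : ℝ) + 2) - α)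
          ≤ c * ∫ t in T,
                t ^ (-(α * β * ((((n : ℝ) + 1) * (1 - β) + α) / (α * β))) - 1) := by
  rw [neg_mul_p₀_sub_one hα hβ.ne']
  have hp : -((n : ℝ) + 2) - α ≤ 0 := by
    have : 0 < β * (n + 1) := by positivity
    linarith
  have hq : -((n : ℝ) + 2) - α + β * (n + 1) < -1 := by linarith
  have hball : 0 < volume.real (Metric.ball (0 : EuclideanSpace ℝ (Fin (n + 1))) 1) :=
    ENNReal.toReal_pos (Metric.measure_ball_pos _ _ one_pos).ne' measure_ball_lt_top.ne
  exact ⟨2 ^ (-(-((n : ℝ) + 2) - α)) * _, mul_pos (by positivity) hball,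
    fun s hs x hx T hTm hT =>
      integrableOn_and_setIntegral_norm_sub_rpow_Pbeta_inter_le hp hq hs hx hTm hT⟩

/-- With `p₀ = ((d-1)(1-β) + α)/(αβ)` and `d = n + 2 ≥ 2`: there is `c > 0`
(depending only on `d`, `α`, `β`) such that for every `s ≥ 1`, every
`x = (x₁, x̃) ∈ ℝ^d` with `x₁ ≤ s/2`, and all `u, v` with `s + s^β ≤ u < v ≤ ∞`,
the Lebesgue integral of `z ↦ |z - x|^{-d-α}` over `P_β^{u,v}` is at most
`c · ∫_u^v t^{-αβp₀ - 1} dt`. -/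
theorem stmt13 (n : ℕ) (α β : ℝ) (hα0 : 0 < α) (hα2 : α < 2)
    (hβ0 : 0 < β) (hβ1 : β < 1) :
    ∃ c > (0 : ℝ), ∀ s : ℝ, 1 ≤ s →
      ∀ x : EuclideanSpace ℝ (Fin (n + 2)), x 0 ≤ s / 2 →
      ∀ u : ℝ, ∀ v : ℝ≥0∞, s + s ^ β ≤ u → ENNReal.ofReal u < v →
        ∫ z in PbetaSlab n β u v, ‖z - x‖ ^ (-((n : ℝ) + 2) - α)
          ≤ c * ∫ t in {t : ℝ | u ≤ t ∧ ENNReal.ofReal t < v},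
                t ^ (-(α * β * ((((n : ℝ) + 1) * (1 - β) + α) / (α * β))) - 1) := by
  obtain ⟨c, hc, hle⟩ := stmt13_general n hα0.ne' hβ0 (by nlinarith [n.cast_nonneg (α := ℝ)])
  refine ⟨c, hc, fun s hs x hx u v hu _ => ?_⟩
  have hsu : s ≤ u := by linarith [Real.rpow_nonneg (zero_le_one.trans hs) β]
  exact (hle s (one_pos.trans_le hs) x hx _ (measurableSet_setOf_le_and_ofReal_lt u v)
    fun t ht => hsu.trans ht.1).2
end
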